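/- Let H ∈ (0,1) and let R(t,s) = t^{2H} + s^{2H} − (1/2)( (t+s)^{2H} + |t−s|^{2H} ) for t,s ≥ 0 be the covariance function of one-dimensional sub-fractional Brownian motion S^H. Then there exists a constant κ_H > 0 such that for every integer m ≥ 1 and all times 0 < s₁,…,s_m, t < ∞: inf_{a∈ℝ^m} [ R(t,t) − 2 Σ_{j=1}^m a_j R(t,s_j) + Σ_{i=1}^m Σ_{j=1}^m a_i a_j R(s_i,s_j) ] ≥ κ_H · min{|t−s₁|^{2H},…,|t−s_m|^{2H}, t^{2H}}. Equivalently, for a centered Gaussian process S^H with covariance R, Var(S^H_t | S^H_{s₁},…,S^H_{s_m}) ≥ κ_H min{|t−s₁|^{2H},…,|t−s_m|^{2H}, t^{2H}}, i.e. sub-fractional Brownian motion satisfies strong local nondeterminism with index H. -/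

import Mathlib

open Real
open scoped Topology

noncomputable section

/-- The covariance kernel of sub-fractional Brownian motion with parameter `H`. -/
def Rsubfbm (H t s : ℝ) : ℝ :=
  t ^ (2 * H) + s ^ (2 * H) - (1 / 2) * ((t + s) ^ (2 * H) + |t - s| ^ (2 * H))

/-!
In `L²(0, ∞)` the vectors `v_x(l) = (1 - cos (x l)) l ^ (-H - 1/2)` have Gram matrix proportional
to `Rsubfbm H`, so the prediction error is the squared distance from `v_t` to a combination
of the `v_{s_j}`. Pairing `v_x` with the same family of index `1 - H` gives the kernel of index
`1/2`, which is `min x y`. The second difference at `t` with step `r` of the family of index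
`1 - H` is thus orthogonal to every `v_x` with `|t - x| ≥ r`, as `min x` is affine on
`[t - r, t + r]`, but not to `v_t`. The bound follows by the Cauchy–Schwarz inequality and scaling.
-/

section

open MeasureTheory Set Filter Asymptotics

section Prediction

variable {ι : Type*} [Fintype ι]

/-- The mean square error of the predictor `∑ j, a j * X (s j)` of `X t`, where `X` is a centred
process with covariance `K`. -/
def predictionError {α : Type*} (K : α → α → ℝ) (s : ι → α) (t : α) (a : ι → ℝ) : ℝ :=
  K t t - 2 * ∑ j, a j * K t (s j) + ∑ i, ∑ j, a i * a j * K (s i) (s j)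

variable {E : Type*} [NormedAddCommGroup E] [InnerProductSpace ℝ E]

lemma predictionError_inner (u : ι → E) (v : E) (a : ι → ℝ) :
    predictionError (inner ℝ) u v a = ‖v - ∑ j, a j • u j‖ ^ 2 := by
  rw [norm_sub_sq_real, predictionError]
  simp only [← real_inner_self_eq_norm_sq, inner_sum, sum_inner, real_inner_smul_left,
    real_inner_smul_right, mul_assoc]
  congr 1
  rw [Finset.sum_comm]
  simp only [mul_left_comm]

lemma sq_inner_le_norm_sq_mul_predictionError {u : ι → E} {w : E} (h : ∀ j, inner ℝ (u j) w = 0)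
    (v : E) (a : ι → ℝ) :
    inner ℝ v w ^ 2 ≤ ‖w‖ ^ 2 * predictionError (inner ℝ) u v a := by
  have inner_residual : inner ℝ (v - ∑ j, a j • u j) w = inner ℝ v w := by
    simp [inner_sub_left, sum_inner, real_inner_smul_left, h]
  rw [predictionError_inner, ← inner_residual, mul_comm, ← mul_pow]
  exact sq_le_sq.2 ((abs_real_inner_le_norm _ _).trans (le_abs_self _))

end Prediction

/-- Half the symmetric second difference of `f` at `t` with step `r`. -/
def halfSecondDiff {E : Type*} [AddCommGroup E] [Module ℝ E] (f : ℝ → E) (t r : ℝ) : E :=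
  (1 / 2 : ℝ) • (f (t + r) + f (t - r)) - f t

lemma inner_halfSecondDiff {E : Type*} [NormedAddCommGroup E] [InnerProductSpace ℝ E] (v : E)
    (f : ℝ → E) (t r : ℝ) :
    inner ℝ v (halfSecondDiff f t r) = halfSecondDiff (fun x => inner ℝ v (f x)) t r := by
  simp only [halfSecondDiff, inner_sub_right, inner_add_right, real_inner_smul_right, smul_eq_mul]

lemma halfSecondDiff_min_of_le_abs_sub {x t r : ℝ} (hr : 0 ≤ r) (h : r ≤ |t - x|) :
    halfSecondDiff (min x) t r = 0 := by
  simp only [halfSecondDiff, smul_eq_mul]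
  rcases le_abs.1 h with h | h
  · rw [min_eq_left (by linarith), min_eq_left (by linarith), min_eq_left (by linarith)]
    ring
  · rw [min_eq_right (by linarith), min_eq_right (by linarith), min_eq_right (by linarith)]
    ring

lemma halfSecondDiff_min_self {t r : ℝ} (hr : 0 ≤ r) : halfSecondDiff (min t) t r = -(r / 2) := by
  simp only [halfSecondDiff, smul_eq_mul]
  rw [min_eq_left (by linarith), min_eq_right (by linarith), min_self]
  ring

/-- The normalizing constant `∫₀^∞ l ^ (-2H - 1) (1 - cos l) dl` in the spectral representation
of `|x| ^ (2H)`. -/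
def spectralConst (H : ℝ) : ℝ := ∫ l in Ioi (0 : ℝ), l ^ (-(2 * H) - 1) * (1 - cos l)

lemma one_sub_cos_isBigO_sq (F : Filter ℝ) : (fun l => 1 - cos l) =O[F] fun l => l ^ 2 := by
  refine IsBigO.of_bound' (Eventually.of_forall fun l => ?_)
  rw [norm_of_nonneg (sub_nonneg.2 (cos_le_one l)), norm_of_nonneg (sq_nonneg l)]
  linarith [one_sub_sq_div_two_le_cos (x := l), sq_nonneg l]

lemma one_sub_cos_isBigO_one (F : Filter ℝ) : (fun l => 1 - cos l) =O[F] fun _ => (1 : ℝ) := by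
  refine IsBigO.of_bound 2 (Eventually.of_forall fun l => ?_)
  rw [norm_of_nonneg (sub_nonneg.2 (cos_le_one l)), norm_one]
  linarith [neg_one_le_cos l]

section SpectralIntegral

variable {H : ℝ}

lemma integrableOn_rpow_mul_one_sub_cos (hH : H ∈ Ioo 0 1) :
    IntegrableOn (fun l : ℝ => l ^ (-(2 * H) - 1) * (1 - cos l)) (Ioi 0) :=
  mellin_convergent_of_isBigO_scalar (a := 0) (b := -2)
    ((continuous_const.sub continuous_cos).locallyIntegrable.locallyIntegrableOn _)
    (by simpa using one_sub_cos_isBigO_one atTop) (by linarith [hH.1])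
    (by simpa using one_sub_cos_isBigO_sq (𝓝[>] 0)) (by linarith [hH.2])

lemma spectralConst_pos (hH : H ∈ Ioo 0 1) : 0 < spectralConst H := by
  have nonneg : ∀ l ∈ Ioi (0 : ℝ), 0 ≤ l ^ (-(2 * H) - 1) * (1 - cos l) := fun l hl =>
    mul_nonneg (rpow_nonneg (mem_Ioi.1 hl).le _) (sub_nonneg.2 (cos_le_one l))
  rw [spectralConst, setIntegral_pos_iff_support_of_nonneg_ae
    (ae_restrict_of_forall_mem measurableSet_Ioi nonneg) (integrableOn_rpow_mul_one_sub_cos hH)]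
  have pos_on_unit : Ioo (0 : ℝ) 1 ⊆
      Function.support (fun l : ℝ => l ^ (-(2 * H) - 1) * (1 - cos l)) ∩ Ioi 0 := by
    rintro l ⟨hl0, hl1⟩
    have cos_lt : cos l < 1 := by
      simpa using cos_lt_cos_of_nonneg_of_le_pi le_rfl (by linarith [pi_gt_three]) hl0
    exact ⟨(mul_pos (rpow_pos_of_pos hl0 _) (sub_pos.2 cos_lt)).ne', hl0⟩
  exact lt_of_lt_of_le (by simp) (measure_mono pos_on_unit)

lemma rpow_mul_one_sub_cos_scale (H : ℝ) {x l : ℝ} (hx : x ≠ 0) (hl : 0 < l) :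
    l ^ (-(2 * H) - 1) * (1 - cos (x * l)) =
      |x| ^ (2 * H + 1) * ((|x| * l) ^ (-(2 * H) - 1) * (1 - cos (|x| * l))) := by
  have hx' : 0 < |x| := abs_pos.2 hx
  have cancel : |x| ^ (2 * H + 1) * |x| ^ (-(2 * H) - 1) = 1 := by
    rw [← rpow_add hx', show 2 * H + 1 + (-(2 * H) - 1) = 0 by ring, rpow_zero]
  have cos_abs_mul : cos (|x| * l) = cos (x * l) := by
    rw [← cos_abs (x * l), abs_mul, abs_of_pos hl]
  rw [mul_rpow hx'.le hl.le, cos_abs_mul]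
  linear_combination (-(l ^ (-(2 * H) - 1)) * (1 - cos (x * l))) * cancel

lemma integrableOn_rpow_mul_one_sub_cos_mul (hH : H ∈ Ioo 0 1) (x : ℝ) :
    IntegrableOn (fun l : ℝ => l ^ (-(2 * H) - 1) * (1 - cos (x * l))) (Ioi 0) := by
  rcases eq_or_ne x 0 with rfl | hx
  · simp
  refine IntegrableOn.congr_fun (Integrable.const_mul ?_ _)
    (fun l hl => (rpow_mul_one_sub_cos_scale H hx hl).symm) measurableSet_Ioi
  exact (integrableOn_Ioi_comp_mul_left_iff (fun l => l ^ (-(2 * H) - 1) * (1 - cos l)) 0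
    (abs_pos.2 hx)).2 (by simpa using integrableOn_rpow_mul_one_sub_cos hH)

lemma integral_rpow_mul_one_sub_cos_mul (hH : H ≠ 0) (x : ℝ) :
    ∫ l in Ioi (0 : ℝ), l ^ (-(2 * H) - 1) * (1 - cos (x * l)) =
      spectralConst H * |x| ^ (2 * H) := by
  rcases eq_or_ne x 0 with rfl | hx
  · simp [hH]
  rw [setIntegral_congr_fun measurableSet_Ioi fun l hl => rpow_mul_one_sub_cos_scale H hx hl,
    integral_const_mul, integral_comp_mul_left_Ioi (fun l => l ^ (-(2 * H) - 1) * (1 - cos l)) 0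
      (abs_pos.2 hx), mul_zero, rpow_add_one (abs_pos.2 hx).ne', smul_eq_mul, ← spectralConst]
  field_simp

lemma rpow_mul_one_sub_cos_mul_one_sub_cos (H x y : ℝ) :
    (fun l : ℝ => l ^ (-(2 * H) - 1) * ((1 - cos (x * l)) * (1 - cos (y * l)))) = fun l =>
      l ^ (-(2 * H) - 1) * (1 - cos (x * l)) + l ^ (-(2 * H) - 1) * (1 - cos (y * l)) -
        1 / 2 * (l ^ (-(2 * H) - 1) * (1 - cos ((x + y) * l)) +
          l ^ (-(2 * H) - 1) * (1 - cos ((x - y) * l))) := by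
  funext l
  simp only [add_mul x, sub_mul x, cos_add, cos_sub]
  ring

lemma integrableOn_rpow_mul_one_sub_cos_mul_one_sub_cos (hH : H ∈ Ioo 0 1) (x y : ℝ) :
    IntegrableOn (fun l : ℝ => l ^ (-(2 * H) - 1) * ((1 - cos (x * l)) * (1 - cos (y * l))))
      (Ioi 0) := by
  have int := integrableOn_rpow_mul_one_sub_cos_mul hH
  rw [rpow_mul_one_sub_cos_mul_one_sub_cos]
  exact ((int x).add (int y)).sub (((int (x + y)).add (int (x - y))).const_mul (1 / 2))

lemma integral_rpow_mul_one_sub_cos_mul_one_sub_cos (hH : H ∈ Ioo 0 1) {x y : ℝ} (hx : 0 ≤ x)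
    (hy : 0 ≤ y) :
    ∫ l in Ioi (0 : ℝ), l ^ (-(2 * H) - 1) * ((1 - cos (x * l)) * (1 - cos (y * l))) =
      spectralConst H * Rsubfbm H x y := by
  have int := integrableOn_rpow_mul_one_sub_cos_mul hH
  rw [rpow_mul_one_sub_cos_mul_one_sub_cos,
    integral_sub ((int x).fun_add (int y)) (((int (x + y)).fun_add (int (x - y))).const_mul _),
    integral_const_mul, integral_add (int x) (int y), integral_add (int (x + y)) (int (x - y))]
  simp only [integral_rpow_mul_one_sub_cos_mul hH.1.ne', Rsubfbm, abs_of_nonneg hx,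
    abs_of_nonneg hy, abs_of_nonneg (add_nonneg hx hy)]
  ring

end SpectralIntegral

lemma Rsubfbm_half : Rsubfbm (1 / 2) = min := by
  funext x y
  simp only [Rsubfbm, mul_one_div_cancel (two_ne_zero' ℝ), rpow_one]
  linarith [min_add_max x y, max_sub_min_eq_abs' x y]

lemma Rsubfbm_self_le {H r : ℝ} (hH : 0 < H) (hr : 0 ≤ r) :
    Rsubfbm H r r ≤ 2 * r ^ (2 * H) := by
  have : 0 ≤ (r + r) ^ (2 * H) := by positivity
  rw [Rsubfbm, sub_self, abs_zero, zero_rpow (by positivity)]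
  linarith

/-- The spectral function of index `H` at `x`: on `(0, ∞)`, its product with the one at `y`
integrates to a multiple of `Rsubfbm H x y`. -/
def spectralFun (H x l : ℝ) : ℝ := l ^ (-H - 1 / 2) * (1 - cos (x * l))

lemma spectralFun_mul_spectralFun (H K x y : ℝ) {l : ℝ} (hl : 0 < l) :
    spectralFun H x l * spectralFun K y l =
      l ^ (-(2 * ((H + K) / 2)) - 1) * ((1 - cos (x * l)) * (1 - cos (y * l))) := by
  rw [spectralFun, spectralFun, mul_mul_mul_comm, ← rpow_add hl]
  ring_nf

lemma halfSecondDiff_spectralFun (H t r l : ℝ) :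
    halfSecondDiff (fun x => spectralFun H x l) t r = cos (t * l) * spectralFun H r l := by
  simp only [halfSecondDiff, spectralFun, smul_eq_mul, add_mul, sub_mul, cos_add, cos_sub]
  ring

section SpectralVec

variable {H K : ℝ}

lemma one_sub_mem_Ioo (hH : H ∈ Ioo 0 1) : 1 - H ∈ Ioo 0 1 :=
  ⟨sub_pos.2 hH.2, sub_lt_self 1 hH.1⟩

lemma memLp_spectralFun (hH : H ∈ Ioo 0 1) (x : ℝ) :
    MemLp (spectralFun H x) 2 (volume.restrict (Ioi 0)) := by
  have meas : Measurable (spectralFun H x) := by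
    unfold spectralFun
    fun_prop
  rw [memLp_two_iff_integrable_sq meas.aestronglyMeasurable]
  refine IntegrableOn.congr_fun (integrableOn_rpow_mul_one_sub_cos_mul_one_sub_cos hH x x)
    (fun l hl => ?_) measurableSet_Ioi
  rw [sq, spectralFun_mul_spectralFun H H x x hl, add_self_div_two]

/-- The vector of `L²(0, ∞)` that represents the value at time `x` of sub-fractional Brownian
motion of index `H`, up to the factor `spectralConst H` in the covariance. -/
def spectralVec (hH : H ∈ Ioo 0 1) (x : ℝ) : Lp ℝ 2 (volume.restrict (Ioi (0 : ℝ))) :=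
  (memLp_spectralFun hH x).toLp (spectralFun H x)

lemma inner_spectralVec (hH : H ∈ Ioo 0 1) (hK : K ∈ Ioo 0 1) {x y : ℝ} (hx : 0 ≤ x)
    (hy : 0 ≤ y) :
    inner ℝ (spectralVec hH x) (spectralVec hK y) =
      spectralConst ((H + K) / 2) * Rsubfbm ((H + K) / 2) x y := by
  have mean_mem : (H + K) / 2 ∈ Ioo 0 1 :=
    ⟨by linarith [hH.1, hK.1], by linarith [hH.2, hK.2]⟩
  rw [L2.inner_def, ← integral_rpow_mul_one_sub_cos_mul_one_sub_cos mean_mem hx hy]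
  refine integral_congr_ae ?_
  filter_upwards [(memLp_spectralFun hH x).coeFn_toLp, (memLp_spectralFun hK y).coeFn_toLp,
    ae_restrict_mem measurableSet_Ioi] with l hl_x hl_y hl
  rw [← spectralFun_mul_spectralFun H K x y hl, spectralVec, spectralVec, hl_x, hl_y,
    real_inner_eq_re_inner, RCLike.inner_apply, conj_trivial, mul_comm, RCLike.re_to_real]

lemma inner_spectralVec_self_index (hH : H ∈ Ioo 0 1) {x y : ℝ} (hx : 0 ≤ x) (hy : 0 ≤ y) :
    inner ℝ (spectralVec hH x) (spectralVec hH y) = spectralConst H * Rsubfbm H x y := by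
  rw [inner_spectralVec hH hH hx hy, add_self_div_two]

lemma inner_spectralVec_dual_index (hH : H ∈ Ioo 0 1) {x y : ℝ}
    (hx : 0 ≤ x) (hy : 0 ≤ y) :
    inner ℝ (spectralVec hH x) (spectralVec (one_sub_mem_Ioo hH) y) =
      spectralConst (1 / 2) * min x y := by
  rw [inner_spectralVec hH (one_sub_mem_Ioo hH) hx hy, add_sub_cancel, Rsubfbm_half]

lemma inner_spectralVec_halfSecondDiff (hH : H ∈ Ioo 0 1) {x t r : ℝ}
    (hx : 0 ≤ x) (hr : 0 ≤ r) (hrt : r ≤ t) :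
    inner ℝ (spectralVec hH x) (halfSecondDiff (spectralVec (one_sub_mem_Ioo hH)) t r) =
      spectralConst (1 / 2) * halfSecondDiff (min x) t r := by
  rw [inner_halfSecondDiff]
  simp only [halfSecondDiff, smul_eq_mul]
  rw [inner_spectralVec_dual_index hH hx (by linarith),
    inner_spectralVec_dual_index hH hx (by linarith),
    inner_spectralVec_dual_index hH hx (by linarith)]
  ring

lemma norm_halfSecondDiff_spectralVec_le (hH : H ∈ Ioo 0 1) (t r : ℝ) :
    ‖halfSecondDiff (spectralVec hH) t r‖ ≤ ‖spectralVec hH r‖ := by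
  have ae_eq : ⇑(halfSecondDiff (spectralVec hH) t r) =ᵐ[volume.restrict (Ioi 0)] fun l =>
      cos (t * l) * spectralFun H r l := by
    rw [← funext (halfSecondDiff_spectralFun H t r)]
    exact MemLp.coeFn_toLp ((((memLp_spectralFun hH (t + r)).add
      (memLp_spectralFun hH (t - r))).const_smul (1 / 2 : ℝ)).sub (memLp_spectralFun hH t))
  refine Lp.norm_le_norm_of_ae_le ?_
  filter_upwards [ae_eq, (memLp_spectralFun hH r).coeFn_toLp] with l hl_diff hl
  rw [hl_diff, spectralVec, hl, norm_mul]
  exact mul_le_of_le_one_left (norm_nonneg _) (abs_cos_le_one _)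

lemma norm_sq_halfSecondDiff_spectralVec_le (hH : H ∈ Ioo 0 1) (t : ℝ) {r : ℝ} (hr : 0 ≤ r) :
    ‖halfSecondDiff (spectralVec hH) t r‖ ^ 2 ≤ 2 * spectralConst H * r ^ (2 * H) := by
  calc ‖halfSecondDiff (spectralVec hH) t r‖ ^ 2
      ≤ ‖spectralVec hH r‖ ^ 2 := by gcongr; exact norm_halfSecondDiff_spectralVec_le hH t r
    _ = spectralConst H * Rsubfbm H r r := by
        rw [← real_inner_self_eq_norm_sq, inner_spectralVec_self_index hH hr hr]
    _ ≤ spectralConst H * (2 * r ^ (2 * H)) :=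
        mul_le_mul_of_nonneg_left (Rsubfbm_self_le hH.1 hr) (spectralConst_pos hH).le
    _ = 2 * spectralConst H * r ^ (2 * H) := by ring

variable {ι : Type*} [Fintype ι] {s : ι → ℝ} {t : ℝ}

lemma predictionError_spectralVec (hH : H ∈ Ioo 0 1) (hs : ∀ j, 0 ≤ s j) (ht : 0 ≤ t)
    (a : ι → ℝ) :
    predictionError (inner ℝ) (fun j => spectralVec hH (s j)) (spectralVec hH t) a =
      spectralConst H * predictionError (Rsubfbm H) s t a := by
  simp only [predictionError, inner_spectralVec_self_index hH, hs, ht, mul_add, mul_sub,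
    Finset.mul_sum, mul_left_comm]

lemma predictionError_Rsubfbm_nonneg (hH : H ∈ Ioo 0 1) (hs : ∀ j, 0 ≤ s j) (ht : 0 ≤ t)
    (a : ι → ℝ) : 0 ≤ predictionError (Rsubfbm H) s t a := by
  refine nonneg_of_mul_nonneg_right ?_ (spectralConst_pos hH)
  rw [← predictionError_spectralVec hH hs ht, predictionError_inner]
  positivity

/-- The constant of strong local nondeterminism produced by the duality between the indices `H`
and `1 - H`. -/
def nondeterminismConst (H : ℝ) : ℝ :=
  spectralConst (1 / 2) ^ 2 / (8 * spectralConst H * spectralConst (1 - H))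

lemma nondeterminismConst_pos (hH : H ∈ Ioo 0 1) : 0 < nondeterminismConst H := by
  have := spectralConst_pos hH
  have := spectralConst_pos (one_sub_mem_Ioo hH)
  have := spectralConst_pos (H := 1 / 2) ⟨by norm_num, by norm_num⟩
  unfold nondeterminismConst
  positivity

lemma sq_spectralConst_half_mul_le_predictionError (hH : H ∈ Ioo 0 1) {r : ℝ} (hr : 0 ≤ r)
    (hs : ∀ j, 0 ≤ s j) (hrt : r ≤ t) (hrs : ∀ j, r ≤ |t - s j|) (a : ι → ℝ) :
    (spectralConst (1 / 2) * (r / 2)) ^ 2 ≤ 2 * spectralConst (1 - H) * r ^ (2 * (1 - H)) *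
      (spectralConst H * predictionError (Rsubfbm H) s t a) := by
  have hK := one_sub_mem_Ioo hH
  have ht : 0 ≤ t := hr.trans hrt
  set w := halfSecondDiff (spectralVec hK) t r
  have orthogonal : ∀ j, inner ℝ (spectralVec hH (s j)) w = 0 := fun j => by
    rw [inner_spectralVec_halfSecondDiff hH (hs j) hr hrt,
      halfSecondDiff_min_of_le_abs_sub hr (hrs j), mul_zero]
  have inner_target : inner ℝ (spectralVec hH t) w = -(spectralConst (1 / 2) * (r / 2)) := by
    rw [inner_spectralVec_halfSecondDiff hH ht hr hrt, halfSecondDiff_min_self hr, mul_neg]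
  calc (spectralConst (1 / 2) * (r / 2)) ^ 2
      = inner ℝ (spectralVec hH t) w ^ 2 := by rw [inner_target, neg_sq]
    _ ≤ ‖w‖ ^ 2 * (spectralConst H * predictionError (Rsubfbm H) s t a) := by
        rw [← predictionError_spectralVec hH hs ht]
        exact sq_inner_le_norm_sq_mul_predictionError orthogonal _ a
    _ ≤ _ := mul_le_mul_of_nonneg_right (norm_sq_halfSecondDiff_spectralVec_le hK t hr)
        (mul_nonneg (spectralConst_pos hH).le (predictionError_Rsubfbm_nonneg hH hs ht a))

lemma nondeterminismConst_mul_rpow_le_predictionError (hH : H ∈ Ioo 0 1) {r : ℝ} (hr : 0 ≤ r)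
    (hs : ∀ j, 0 ≤ s j) (hrt : r ≤ t) (hrs : ∀ j, r ≤ |t - s j|) (a : ι → ℝ) :
    nondeterminismConst H * r ^ (2 * H) ≤ predictionError (Rsubfbm H) s t a := by
  have hC := spectralConst_pos hH
  have hD := spectralConst_pos (one_sub_mem_Ioo hH)
  rcases hr.eq_or_lt with rfl | hr'
  · rw [zero_rpow (mul_pos two_pos hH.1).ne', mul_zero]
    exact predictionError_Rsubfbm_nonneg hH hs hrt a
  have rpow_split : r ^ (2 * H) * r ^ (2 * (1 - H)) = r ^ 2 := by
    rw [← rpow_add hr', ← rpow_two]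
    ring_nf
  have bound := sq_spectralConst_half_mul_le_predictionError hH hr hs hrt hrs a
  have hpow : 0 < r ^ (2 * (1 - H)) := rpow_pos_of_pos hr' _
  rw [nondeterminismConst, div_mul_eq_mul_div, div_le_iff₀ (by positivity)]
  refine le_of_mul_le_mul_right ?_ hpow
  rw [mul_assoc, rpow_split]
  linarith

end SpectralVec

end

/-- Corollary 6.3. Sub-fractional Brownian motion satisfies strong local
nondeterminism with index `H`: there is `κ > 0` such that for all `m ≥ 1`,
`0 < s₁,…,s_m, t` and all `a ∈ ℝ^m`, the prediction-error quadratic form of the kernel `R`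
is at least `κ · min{|t−s₁|^{2H},…,|t−s_m|^{2H}, t^{2H}}`. -/
theorem stmt_19 (H : ℝ) (hH : H ∈ Set.Ioo (0 : ℝ) 1) :
    ∃ κ : ℝ, 0 < κ ∧ ∀ (m : ℕ) (s : Fin (m + 1) → ℝ) (t : ℝ),
      (∀ j, 0 < s j) → 0 < t → ∀ a : Fin (m + 1) → ℝ,
        κ * min (Finset.univ.inf' Finset.univ_nonempty fun j => |t - s j| ^ (2 * H))
            (t ^ (2 * H)) ≤
          Rsubfbm H t t - 2 * ∑ j, a j * Rsubfbm H t (s j) +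
            ∑ i, ∑ j, a i * a j * Rsubfbm H (s i) (s j) := by
  have hH2 : 0 < 2 * H := mul_pos two_pos hH.1
  refine ⟨nondeterminismConst H, nondeterminismConst_pos hH, fun m s t hs ht a => ?_⟩
  set M := min (Finset.univ.inf' Finset.univ_nonempty fun j => |t - s j| ^ (2 * H)) (t ^ (2 * H))
  have hM : 0 ≤ M := le_min (Finset.le_inf' _ _ fun j _ => by positivity) (by positivity)
  -- `r ≤ y` is equivalent to `M ≤ y ^ (2 * H)` for `y ≥ 0`, so `r` is the distance from `t`
  -- to the set of the `s j` and the origin.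
  set r := M ^ (2 * H)⁻¹
  have hrt : r ≤ t := (rpow_inv_le_iff_of_pos hM ht.le hH2).2 (min_le_right _ _)
  have hrs : ∀ j, r ≤ |t - s j| := fun j => (rpow_inv_le_iff_of_pos hM (abs_nonneg _) hH2).2
    ((min_le_left _ _).trans (Finset.inf'_le _ (Finset.mem_univ j)))
  rw [← rpow_inv_rpow hM hH2.ne']
  exact nondeterminismConst_mul_rpow_le_predictionError hH (rpow_nonneg hM _)
    (fun j => (hs j).le) hrt hrs a
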